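/- Let g be a complex semisimple Lie algebra with sl2-triple (e,h,f) and m as above. For every x in the affine subspace e + (m^⊥ under the Killing form identification), the composite linear map g → m*, a ↦ (the restriction to m of κ(·,[a,x])), is surjective. In other words, every adjoint orbit meets e + m^⊥ transversely. -/

import Mathlib

/-!
By nondegeneracy of the Killing form `κ`, surjectivity is dual to the injectivity of `ad x` on `m`.
Suppose that `y ∈ m` commutes with `x` and has leading term `y₀ ∈ g(-n)`, where `n ≥ 1`. For
`w ∈ g(n - 2)` the bracket `⁅y, w⁆` lies in `⨁_{i ≤ -2} g(i)`, which is orthogonal to `x - e`, so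
invariance gives `κ(y₀, ⁅e, w⁆) = 0`. Since `e` maps `g(n - 2)` onto `g(n)`, which is dual to
`g(-n)`, we get `y₀ = 0`; hence `y` descends through the finite grading to zero.

The duality of `g(n)` and `g(-n)` requires that `ad h` has no Jordan block for the eigenvalue `n`.
For vectors killed by `e` this follows from `e f^(i + 1) = (i + 1) f^i (h - i)`, and in general by
induction on the power of `e` that kills the vector, subtracting a preimage of its image under `e`.
-/

open LieModule Module

section CommutationRelations

variable {L M : Type*} [LieRing L] [AddCommGroup M] [LieRingModule L M] {h e f : L}

lemma lie_e_lie_f (ht : IsSl2Triple h e f) (u : M) : ⁅e, ⁅f, u⁆⁆ = ⁅f, ⁅e, u⁆⁆ + ⁅h, u⁆ := by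
  rw [leibniz_lie, ht.lie_e_f, add_comm]

variable {R : Type*} [CommRing R] [LieAlgebra R L] [Module R M] [LieModule R L M]

lemma lie_h_lie_e (ht : IsSl2Triple h e f) (u : M) : ⁅h, ⁅e, u⁆⁆ = ⁅e, ⁅h, u⁆ + (2 : R) • u⁆ := by
  rw [leibniz_lie, ht.lie_h_e_smul R, smul_lie, lie_add, lie_smul, add_comm]

lemma lie_h_lie_f (ht : IsSl2Triple h e f) (u : M) : ⁅h, ⁅f, u⁆⁆ = ⁅f, ⁅h, u⁆ - (2 : R) • u⁆ := by
  rw [leibniz_lie, ht.lie_lie_smul_f R, neg_lie, smul_lie, lie_sub, lie_smul]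
  abel

lemma lie_h_pow_toEnd_f (ht : IsSl2Triple h e f) (n : ℕ) (u : M) :
    ⁅h, (toEnd R L M f ^ n) u⁆ = (toEnd R L M f ^ n) (⁅h, u⁆ - (2 * n : R) • u) := by
  induction n with
  | zero => simp
  | succ n ih =>
    simp only [pow_succ', End.mul_apply, toEnd_apply_apply]
    rw [lie_h_lie_f (R := R) ht, ih, ← map_smul, ← map_sub]
    congr 2
    push_cast
    module

lemma lie_e_pow_succ_toEnd_f (ht : IsSl2Triple h e f) {u : M} (he : ⁅e, u⁆ = 0) (n : ℕ) :
    ⁅e, (toEnd R L M f ^ (n + 1)) u⁆ =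
      (n + 1 : R) • (toEnd R L M f ^ n) (⁅h, u⁆ - (n : R) • u) := by
  induction n with
  | zero => simp [lie_e_lie_f ht, he]
  | succ n ih =>
    rw [pow_succ', End.mul_apply, toEnd_apply_apply, lie_e_lie_f ht, ih, lie_h_pow_toEnd_f ht,
      lie_smul, ← toEnd_apply_apply R L M f, ← End.mul_apply, ← pow_succ', ← map_smul, ← map_smul,
      ← map_add]
    congr 1
    push_cast
    module

end CommutationRelations

section Representation

variable {K L M : Type*} [Field K] [CharZero K] [LieRing L] [LieAlgebra K L]
  [AddCommGroup M] [Module K M] [LieRingModule L M] [LieModule K L M] {h e f : L}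

lemma isNilpotent_of_mul_sub_mul_eq_smul {A : Type*} [Ring A] [Algebra K A] [Module.Finite K A]
    {a b : A} {c : K} (hc : c ≠ 0) (hab : a * b - b * a = c • b) : IsNilpotent b := by
  have commutator_pow (n : ℕ) : a * b ^ n - b ^ n * a = (n * c) • b ^ n := by
    induction n with
    | zero => simp
    | succ n ih =>
      calc a * b ^ (n + 1) - b ^ (n + 1) * a
          = (a * b ^ n - b ^ n * a) * b + b ^ n * (a * b - b * a) := by
            rw [pow_succ]
            noncomm_ring
        _ = (((n + 1 : ℕ) : K) * c) • b ^ (n + 1) := by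
            rw [ih, hab, smul_mul_assoc, mul_smul_comm, ← pow_succ, Nat.cast_succ]
            module
  by_contra hb
  have eigenvalue (n : ℕ) :
      End.HasEigenvalue (LinearMap.mulLeft K a - LinearMap.mulRight K a) (n * c) :=
    End.hasEigenvalue_of_hasEigenvector
      ⟨End.mem_eigenspace_iff.2 (commutator_pow n), fun h0 ↦ hb ⟨n, h0⟩⟩
  exact Set.infinite_of_injective_forall_mem (f := fun n : ℕ ↦ n * c)
    (fun m n hmn ↦ by simpa [hc] using hmn) eigenvalue (End.finite_hasEigenvalue _)

variable (K M) in
lemma isNilpotent_toEnd_e [Module.Finite K M] (ht : IsSl2Triple h e f) :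
    IsNilpotent (toEnd K L M e) := by
  refine isNilpotent_of_mul_sub_mul_eq_smul (a := toEnd K L M h) (two_ne_zero (α := K)) ?_
  ext u
  simp [lie_h_lie_e (R := K) ht]

lemma eq_zero_of_lie_h_eq_smul_add_of_lie_e_eq_zero (ht : IsSl2Triple h e f) {n : ℕ} {k : K}
    {u d : M} (he : ⁅e, u⁆ = 0) (hf : (toEnd K L M f ^ n) u = 0) (hu : ⁅h, u⁆ = k • u + d)
    (hd : ⁅h, d⁆ = k • d) : d = 0 := by
  induction n generalizing u d with
  | zero => simp_all
  | succ n ih =>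
    have hed : ⁅e, d⁆ = 0 := by
      have := lie_h_lie_e (R := K) ht u
      simpa [hu, he] using this.symm
    have hfv : (toEnd K L M f ^ n) ((k - n) • u + d) = 0 := by
      have := lie_e_pow_succ_toEnd_f (R := K) ht he n
      rw [hf, lie_zero, eq_comm, smul_eq_zero_iff_right (Nat.cast_add_one_ne_zero n), hu] at this
      rwa [sub_smul, sub_add_eq_add_sub]
    by_cases hkn : k - n = 0
    · obtain rfl := sub_eq_zero.1 hkn
      rw [hkn, zero_smul, zero_add] at hfv
      by_contra hne
      have primitive : ht.HasPrimitiveVectorWith d (n : K) := ⟨hne, hd, hed⟩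
      exact primitive.pow_toEnd_f_ne_zero_of_eq_nat rfl le_rfl hfv
    · have hv : ⁅h, (k - n) • u + d⁆ = k • ((k - n) • u + d) + (k - n) • d := by
        rw [lie_add, lie_smul, hu, hd]
        module
      have := ih (by simp [he, hed]) hfv hv (by rw [lie_smul, hd, smul_comm])
      exact (smul_eq_zero_iff_right hkn).1 this

/- Applying `e` to the equation for `w` gives an equation of the same shape for `z = ⁅e, w⁆`, with
`k + 2` and `a + k + 2` in place of `k` and `a`, and `w` is recovered from `z` because `a ≠ 0`. -/
lemma exists_lie_f_lie_e_add_smul_eq (ht : IsSl2Triple h e f) {k a n : ℕ} (ha : a ≠ 0) {x : M}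
    (hx : ⁅h, x⁆ = (k : K) • x) (hn : (toEnd K L M e ^ n) x = 0) :
    ∃ w, ⁅h, w⁆ = (k : K) • w ∧ ⁅f, ⁅e, w⁆⁆ + (a : K) • w = x := by
  induction n generalizing k a x with
  | zero => exact ⟨0, by simp, by simpa using hn.symm⟩
  | succ n ih =>
    have hex : ⁅h, ⁅e, x⁆⁆ = ((k + 2 : ℕ) : K) • ⁅e, x⁆ := by
      rw [lie_h_lie_e (R := K) ht, hx, ← add_smul, lie_smul, Nat.cast_add, Nat.cast_ofNat]
    obtain ⟨z, hz, hzx⟩ := ih (a := a + k + 2) (by lia) hex (by rwa [pow_succ, End.mul_apply] at hn)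
    have ha' : (a : K) ≠ 0 := Nat.cast_ne_zero.2 ha
    have hew : ⁅e, x - ⁅f, z⁆⁆ = (a : K) • z := by
      rw [lie_sub, lie_e_lie_f ht, hz, ← hzx]
      push_cast
      module
    refine ⟨(a : K)⁻¹ • (x - ⁅f, z⁆), ?_, ?_⟩
    · rw [lie_smul, lie_sub, hx, lie_h_lie_f (R := K) ht, hz, ← sub_smul, lie_smul]
      push_cast
      module
    · rw [lie_smul, hew, inv_smul_smul₀ ha', smul_inv_smul₀ ha', add_sub_cancel]

variable [Module.Finite K M]

lemma exists_lie_e_eq (ht : IsSl2Triple h e f) {k : ℕ} (hk : k ≠ 0) {x : M}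
    (hx : ⁅h, x⁆ = (k : K) • x) : ∃ w, ⁅h, w⁆ = (k - 2 : K) • w ∧ ⁅e, w⁆ = x := by
  obtain ⟨n, hn⟩ := isNilpotent_toEnd_e K M ht
  obtain ⟨w, hw, rfl⟩ := exists_lie_f_lie_e_add_smul_eq ht hk hx (LinearMap.congr_fun hn x)
  exact ⟨⁅f, w⁆, by rw [lie_h_lie_f (R := K) ht, hw, ← sub_smul, lie_smul],
    by rw [lie_e_lie_f ht, hw]⟩

lemma eq_zero_of_lie_h_eq_natCast_smul_add (ht : IsSl2Triple h e f) {k : ℕ} {u d : M}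
    (hu : ⁅h, u⁆ = (k : K) • u + d) (hd : ⁅h, d⁆ = (k : K) • d) : d = 0 := by
  obtain ⟨n, hn⟩ := isNilpotent_toEnd_e K M ht
  replace hn : (toEnd K L M e ^ n) u = 0 := LinearMap.congr_fun hn u
  induction n generalizing k u d with
  | zero => simp_all
  | succ n ih =>
    have heu : ⁅h, ⁅e, u⁆⁆ = ((k + 2 : ℕ) : K) • ⁅e, u⁆ + ⁅e, d⁆ := by
      rw [lie_h_lie_e (R := K) ht, hu, Nat.cast_add, Nat.cast_ofNat, ← lie_smul, ← lie_add]
      congr 1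
      module
    have hed : ⁅h, ⁅e, d⁆⁆ = ((k + 2 : ℕ) : K) • ⁅e, d⁆ := by
      rw [lie_h_lie_e (R := K) ht, hd, ← add_smul, lie_smul, Nat.cast_add, Nat.cast_ofNat]
    have hed_zero : ⁅e, d⁆ = 0 := ih heu hed (by rwa [pow_succ, End.mul_apply] at hn)
    rw [hed_zero, add_zero] at heu
    obtain ⟨w, hw, hew⟩ := exists_lie_e_eq ht (by lia) heu
    have huw : ⁅h, u - w⁆ = (k : K) • (u - w) + d := by
      rw [lie_sub, hu, hw]
      push_cast
      module
    obtain ⟨r, hr⟩ := isNilpotent_toEnd_e K M ht.symm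
    exact eq_zero_of_lie_h_eq_smul_add_of_lie_e_eq_zero ht (by rw [lie_sub, hew, sub_self])
      (LinearMap.congr_fun hr _) huw hd

lemma eigenspace_sup_range_eq_top (ht : IsSl2Triple h e f) (k : ℕ) :
    End.eigenspace (toEnd K L M h) k ⊔
      LinearMap.range (toEnd K L M h - algebraMap K (End K M) k) = ⊤ := by
  set T := toEnd K L M h - algebraMap K (End K M) k
  rw [End.eigenspace_def, sup_comm]
  refine Submodule.eq_top_of_disjoint _ _ (LinearMap.finrank_range_add_finrank_ker T).ge ?_
  rw [Submodule.disjoint_def]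
  rintro _ ⟨u, rfl⟩ hTu
  exact eq_zero_of_lie_h_eq_natCast_smul_add ht (add_sub_cancel ((k : K) • u) ⁅h, u⁆).symm
    (sub_eq_zero.1 hTu)

end Representation

section AdFiltration

variable {R L : Type*} [CommRing R] [LieRing L] [LieAlgebra R L] {h e : L}

variable (R) in
/-- The filtration step `g(≤ n) = ⨁_{i ≤ n} g(i)` of a Lie algebra, where `g(i)` is the eigenspace
of `ad h` for the integer `i`; encoded as a supremum of submodules, without a bundled grading. -/
def adFiltration (h : L) (n : ℤ) : Submodule R L :=
  ⨆ i : ℤ, ⨆ _ : i ≤ n, End.eigenspace (LieAlgebra.ad R L h) (i : R)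

lemma adFiltration_le_iff {n : ℤ} {S : Submodule R L} :
    adFiltration R h n ≤ S ↔ ∀ i ≤ n, ∀ y, ⁅h, y⁆ = (i : R) • y → y ∈ S := by
  simp_rw [adFiltration, iSup_le_iff]
  exact forall₂_congr fun i _ ↦ forall_congr' fun y ↦ imp_congr_left End.mem_eigenspace_iff

lemma mem_adFiltration {n i : ℤ} (hi : i ≤ n) {y : L} (hy : ⁅h, y⁆ = (i : R) • y) :
    y ∈ adFiltration R h n :=
  adFiltration_le_iff.1 le_rfl i hi y hy

lemma adFiltration_mono : Monotone (adFiltration R h) := fun _ _ hmn ↦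
  adFiltration_le_iff.2 fun _ hi _ hy ↦ mem_adFiltration (hi.trans hmn) hy

lemma adFiltration_eq_eigenspace_sup (h : L) (n : ℤ) :
    adFiltration R h n =
      End.eigenspace (LieAlgebra.ad R L h) (n : R) ⊔ adFiltration R h (n - 1) := by
  refine le_antisymm (adFiltration_le_iff.2 fun i hi y hy ↦ ?_)
    (sup_le (fun y hy ↦ ?_) (adFiltration_mono (sub_one_lt n).le))
  · obtain rfl | hlt := hi.eq_or_lt
    · exact Submodule.mem_sup_left (End.mem_eigenspace_iff.2 hy)
    · exact Submodule.mem_sup_right (mem_adFiltration (Int.le_sub_one_of_lt hlt) hy)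
  · exact mem_adFiltration le_rfl (End.mem_eigenspace_iff.1 hy)

lemma lie_mem_adFiltration {n j : ℤ} {w y : L} (hw : ⁅h, w⁆ = (j : R) • w)
    (hy : y ∈ adFiltration R h n) : ⁅w, y⁆ ∈ adFiltration R h (j + n) := by
  have : adFiltration R h n ≤ (adFiltration R h (j + n)).comap (LieAlgebra.ad R L w) := by
    refine adFiltration_le_iff.2 fun i hi z hz ↦ mem_adFiltration (i := j + i) (by lia) ?_
    rw [LieAlgebra.ad_apply, leibniz_lie, hw, hz, smul_lie, lie_smul, ← add_smul, Int.cast_add]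
  exact this hy

lemma killingForm_eq_zero_of_add_ne_zero [NoZeroDivisors R] {i j : R} (hij : i + j ≠ 0) {y v : L}
    (hy : ⁅h, y⁆ = i • y) (hv : ⁅h, v⁆ = j • v) : killingForm R L y v = 0 := by
  have invariance := traceForm_apply_lie_apply R L L y h v
  rw [← lie_skew, hy, hv] at invariance
  simp only [map_neg, map_smul, LinearMap.neg_apply, LinearMap.smul_apply, smul_eq_mul]
    at invariance
  refine (mul_eq_zero.1 ?_).resolve_left hij
  linear_combination -invariance

lemma killingForm_eq_zero_of_mem_adFiltration [NoZeroDivisors R] [CharZero R] {n j : ℤ}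
    (hnj : n + j < 0) {y v : L} (hy : y ∈ adFiltration R h n) (hv : ⁅h, v⁆ = (j : R) • v) :
    killingForm R L y v = 0 := by
  have : adFiltration R h n ≤ LinearMap.ker ((killingForm R L).flip v) := by
    refine adFiltration_le_iff.2 fun i hi z hz ↦ killingForm_eq_zero_of_add_ne_zero ?_ hz hv
    exact_mod_cast (show i + j ≠ 0 by lia)
  exact this hy

lemma killingForm_lie_e_eq_zero {n : ℤ} {x y w : L}
    (hx : ∀ z ∈ adFiltration R h (-2), killingForm R L (x - e) z = 0) (hxy : ⁅x, y⁆ = 0)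
    (hy : y ∈ adFiltration R h (-n)) (hw : ⁅h, w⁆ = (n - 2 : R) • w) :
    killingForm R L y ⁅e, w⁆ = 0 := by
  have hyw : ⁅y, w⁆ ∈ adFiltration R h (-2) := by
    have hwy := lie_mem_adFiltration (j := n - 2) (by exact_mod_cast hw) hy
    rw [sub_add_eq_add_sub, add_neg_cancel, zero_sub] at hwy
    rw [← lie_skew]
    exact neg_mem hwy
  calc killingForm R L y ⁅e, w⁆
      = killingForm R L ⁅x - e, y⁆ w := by
        rw [sub_lie, hxy, zero_sub, lie_skew, traceForm_apply_lie_apply]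
    _ = killingForm R L (x - e) ⁅y, w⁆ := traceForm_apply_lie_apply R L L _ _ _
    _ = 0 := hx _ hyw

end AdFiltration

section Killing

variable {K L : Type*} [Field K] [CharZero K] [LieRing L] [LieAlgebra K L] [Module.Finite K L]
  {h e f : L}

lemma exists_adFiltration_eq_bot (h : L) : ∃ N : ℕ, adFiltration K h (-N) = ⊥ := by
  have finite : {i : ℤ | (LieAlgebra.ad K L h).HasEigenvalue (i : K)}.Finite :=
    (End.finite_hasEigenvalue _).preimage Int.cast_injective.injOn
  obtain ⟨b, hb⟩ := finite.bddBelow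
  refine ⟨b.natAbs + 1, le_bot_iff.1 (adFiltration_le_iff.2 fun i hi y hy ↦ ?_)⟩
  by_contra hne
  have := hb (End.hasEigenvalue_of_hasEigenvector ⟨End.mem_eigenspace_iff.2 hy, hne⟩)
  lia

variable [LieAlgebra.IsKilling K L]

lemma eq_zero_of_forall_killingForm_eigenspace_eq_zero (ht : IsSl2Triple h e f) {n : ℕ} {y : L}
    (hy : ⁅h, y⁆ = (-n : K) • y)
    (hyv : ∀ v, ⁅h, v⁆ = (n : K) • v → killingForm K L y v = 0) : y = 0 := by
  refine (LieAlgebra.IsKilling.killingForm_nondegenerate K L).1 y fun a ↦ ?_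
  have ha : a ∈ End.eigenspace (toEnd K L L h) (n : K) ⊔
      LinearMap.range (toEnd K L L h - algebraMap K (End K L) n) := by
    rw [eigenspace_sup_range_eq_top ht]
    exact Submodule.mem_top
  obtain ⟨v, hv, _, ⟨w, rfl⟩, rfl⟩ := Submodule.mem_sup.1 ha
  have range_orthogonal : killingForm K L y (⁅h, w⁆ - (n : K) • w) = 0 := by
    rw [map_sub, ← traceForm_apply_lie_apply, ← lie_skew, hy]
    simp
  rw [map_add, hyv v (End.mem_eigenspace_iff.1 hv), zero_add]
  exact range_orthogonal

lemma mem_adFiltration_sub_one_of_lie_eq_zero (ht : IsSl2Triple h e f) {n : ℕ} (hn : n ≠ 0)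
    {x y : L} (hx : ∀ z ∈ adFiltration K h (-2), killingForm K L (x - e) z = 0)
    (hxy : ⁅x, y⁆ = 0) (hy : y ∈ adFiltration K h (-n)) : y ∈ adFiltration K h (-n - 1) := by
  have hsup := hy
  rw [adFiltration_eq_eigenspace_sup] at hsup
  obtain ⟨y₀, hy₀, y', hy', rfl⟩ := Submodule.mem_sup.1 hsup
  replace hy₀ : ⁅h, y₀⁆ = (-n : K) • y₀ := by simpa using hy₀
  suffices leading_eq_zero : y₀ = 0 by rwa [leading_eq_zero, zero_add]
  refine eq_zero_of_forall_killingForm_eigenspace_eq_zero ht hy₀ fun v hv ↦ ?_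
  obtain ⟨w, hw, rfl⟩ := exists_lie_e_eq ht hn hv
  have total : killingForm K L (y₀ + y') ⁅e, w⁆ = 0 :=
    killingForm_lie_e_eq_zero hx hxy hy (by exact_mod_cast hw)
  have tail : killingForm K L y' ⁅e, w⁆ = 0 :=
    killingForm_eq_zero_of_mem_adFiltration (j := n) (by lia) hy' (by exact_mod_cast hv)
  rwa [map_add, LinearMap.add_apply, tail, add_zero] at total

lemma eq_zero_of_lie_eq_zero_of_mem_adFiltration (ht : IsSl2Triple h e f) {x y : L}
    (hx : ∀ z ∈ adFiltration K h (-2), killingForm K L (x - e) z = 0) (hxy : ⁅x, y⁆ = 0)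
    (hy : y ∈ adFiltration K h (-1)) : y = 0 := by
  have descend (n : ℕ) : y ∈ adFiltration K h (-(n + 1 : ℕ)) := by
    induction n with
    | zero => exact hy
    | succ n ih =>
      rw [Nat.cast_succ, neg_add']
      exact mem_adFiltration_sub_one_of_lie_eq_zero ht n.succ_ne_zero hx hxy ih
  obtain ⟨N, hN⟩ := exists_adFiltration_eq_bot (K := K) h
  rw [← Submodule.mem_bot K, ← hN]
  exact adFiltration_mono (by lia) (descend N)

end Killing

theorem stmt5_general {K L : Type*} [Field K] [CharZero K] [LieRing L] [LieAlgebra K L]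
    [Module.Finite K L] [LieAlgebra.IsKilling K L] {h e f : L} (ht : IsSl2Triple h e f)
    {m : Submodule K L} (hm : m ≤ adFiltration K h (-1)) {x : L}
    (hx : ∀ y ∈ adFiltration K h (-2), killingForm K L (x - e) y = 0) :
    Function.Surjective (fun a : L ↦ (killingForm K L ⁅a, x⁆).domRestrict m) := by
  let B : L →ₗ[K] m →ₗ[K] K := (killingForm K L ∘ₗ (-LieAlgebra.ad K L x)).domRestrict₂ m
  have hB : (fun a : L ↦ (killingForm K L ⁅a, x⁆).domRestrict m) = B :=
    funext fun a ↦ by rw [← lie_skew]; rfl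
  rw [hB, ← LinearMap.flip_injective_iff₁, injective_iff_map_eq_zero]
  rintro ⟨y, hy⟩ hBy
  have hxy : ⁅x, y⁆ = 0 := by
    refine (LieAlgebra.IsKilling.killingForm_nondegenerate K L).1 _ fun a ↦ ?_
    rw [traceForm_comm, ← traceForm_apply_lie_apply, ← lie_skew]
    exact LinearMap.congr_fun hBy a
  exact Subtype.ext (eq_zero_of_lie_eq_zero_of_mem_adFiltration ht hx hxy (hm hy))

/-- Let `g` be a complex semisimple Lie algebra with `sl₂`-triple
`(e, h, f)` and `m = ℓ ⊕ (⊕_{i ≤ -2} g(i))` as above.  For every `x` in the affine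
subspace `e + m^⊥` (the Killing-orthogonal complement of `m`), the linear map
`g → m*`, `a ↦ κ(⁅a, x⁆, ·)|_m`, is surjective; i.e. every adjoint orbit meets
`e + m^⊥` transversely. -/
theorem stmt5 (L : Type*) [LieRing L] [LieAlgebra ℂ L] [Module.Finite ℂ L]
    [LieAlgebra.IsSemisimple ℂ L] (h e f : L) (ht : IsSl2Triple h e f)
    (ℓ : Submodule ℂ L)
    (hℓsub : ℓ ≤ Module.End.eigenspace (LieAlgebra.ad ℂ L h) (-1 : ℂ))
    (hℓiso : ∀ x ∈ ℓ, ∀ y ∈ ℓ, killingForm ℂ L e ⁅x, y⁆ = 0)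
    (hℓmax : ∀ x ∈ Module.End.eigenspace (LieAlgebra.ad ℂ L h) (-1 : ℂ),
      (∀ y ∈ ℓ, killingForm ℂ L e ⁅x, y⁆ = 0) → x ∈ ℓ)
    (m : Submodule ℂ L)
    (hm : m = ℓ ⊔ ⨆ i : ℤ, ⨆ _ : i ≤ -2,
      Module.End.eigenspace (LieAlgebra.ad ℂ L h) (i : ℂ))
    (x : L) (hx : ∀ y ∈ m, killingForm ℂ L (x - e) y = 0) :
    Function.Surjective (fun a : L => (killingForm ℂ L ⁅a, x⁆).domRestrict m) := by
  subst hm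
  refine stmt5_general ht ?_ fun y hy ↦ hx y (Submodule.mem_sup_right hy)
  rw [adFiltration_eq_eigenspace_sup]
  exact sup_le_sup_right (by simpa using hℓsub) _
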